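/- arXiv:2511.10000 — 2 statements merged into one kernel-verified Lean document; each statement's English description precedes it below -/
import Mathlib

section
/- For every multi-level apportionment instance and every non-negative integer number of seats h, there exists an allocation of h seats that fulfills both upper quota and lower quota. -/
/-!
Seats are handed out from the root towards the leaves. At a node `i` the quotas `(R i / R a) * V a`
with respect to the nodes `a` on the path from the root to `i` (for `a = i` this is `V i` itself)
all lie in an interval of length less than one. Scaling this interval by the entitlement `W c` of a
child `c` gives an interval of the quotas of `c`, again of length less than one, and there are
numbers of seats for the children that add up to `V i` and differ by less than one from every point
of the scaled intervals: rounding down the upper endpoints gives at most `V i` seats in total,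
rounding up the lower endpoints at least `V i`. Hence the same property holds at the children, and
an integer at distance less than one from a quota lies between its floor and its ceiling.
-/

/-- A multi-level apportionment instance: a rooted tree on nodes `0, …, n`
(root `0`, encoded by a parent function with `parent i < i` for `i ≠ 0`),
together with entitlements `W`. -/
structure MLA where
  n : ℕ
  parent : Fin (n + 1) → Fin (n + 1)
  parent_lt : ∀ i : Fin (n + 1), i ≠ 0 → (parent i : ℕ) < (i : ℕ)
  W : Fin (n + 1) → ℝ
  W_pos : ∀ i, 0 < W i
  W_le_one : ∀ i, W i ≤ 1
  W_root : W 0 = 1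
  W_sum : ∀ i : Fin (n + 1),
    (Finset.univ.filter (fun c => c ≠ 0 ∧ parent c = i)).Nonempty →
    ∑ c ∈ Finset.univ.filter (fun c => c ≠ 0 ∧ parent c = i), W c = 1

namespace MLA

variable (T : MLA)

/-- The set of children of node `i`. -/
def children (i : Fin (T.n + 1)) : Finset (Fin (T.n + 1)) :=
  Finset.univ.filter (fun c => c ≠ 0 ∧ T.parent c = i)

/-- The ancestor set `A(i)`: `A(0) = {0}` and `A(i) = {parent i} ∪ A(parent i)`. -/
def ancestors (i : Fin (T.n + 1)) : Finset (Fin (T.n + 1)) :=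
  if h : i = 0 then {0} else insert (T.parent i) (ancestors (T.parent i))
termination_by (i : ℕ)
decreasing_by exact T.parent_lt i h

/-- The entitlement of node `i` relative to the root: `R i = ∏_{a ∈ A(i) ∪ {i}} W a`. -/
def R (i : Fin (T.n + 1)) : ℝ := ∏ a ∈ insert i (T.ancestors i), T.W a

/-- `V` is an allocation of `h` seats. -/
def IsAlloc (h : ℕ) (V : Fin (T.n + 1) → ℕ) : Prop :=
  V 0 = h ∧ ∀ i, (T.children i).Nonempty → V i = ∑ c ∈ T.children i, V c

/-- `V` fulfills lower quota: `V i ≥ LQ i = max_{a ∈ A(i)} ⌊(R i / R a) · V a⌋`. -/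
def FulfillsLowerQuota (V : Fin (T.n + 1) → ℕ) : Prop :=
  ∀ i, ∀ a ∈ T.ancestors i, ⌊T.R i / T.R a * (V a : ℝ)⌋ ≤ (V i : ℤ)

/-- `V` fulfills upper quota: `V i ≤ UQ i = min_{a ∈ A(i)} ⌈(R i / R a) · V a⌉`. -/
def FulfillsUpperQuota (V : Fin (T.n + 1) → ℕ) : Prop :=
  ∀ i, ∀ a ∈ T.ancestors i, (V i : ℤ) ≤ ⌈T.R i / T.R a * (V a : ℝ)⌉


/-- `P` is the set of nodes receiving the new seat in one step of an iterative
method with selection criterion `crit` (to be minimized among children) and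
eligibility constraint `elig`: `P` is a root-to-leaf path, each non-root node on
the path is an eligible child of its parent minimizing `crit` among all eligible
children, and the seat counts along `P` each increase by one. -/
def IsStepWith (crit : (Fin (T.n + 1) → ℕ) → Fin (T.n + 1) → ℝ)
    (elig : (Fin (T.n + 1) → ℕ) → Fin (T.n + 1) → Prop)
    (P : Finset (Fin (T.n + 1))) (Vh Vh1 : Fin (T.n + 1) → ℕ) : Prop :=
  (0 : Fin (T.n + 1)) ∈ P ∧
  (∀ i ∈ P, i ≠ 0 → T.parent i ∈ P) ∧
  (∀ i ∈ P, (T.children i).Nonempty → ∃ c ∈ T.children i, c ∈ P) ∧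
  (∀ c ∈ P, ∀ d ∈ P, c ≠ 0 → d ≠ 0 → T.parent c = T.parent d → c = d) ∧
  (∀ c ∈ P, c ≠ 0 → elig Vh c ∧
    ∀ d ∈ T.children (T.parent c), elig Vh d → crit Vh c ≤ crit Vh d) ∧
  (∀ i, Vh1 i = Vh i + if i ∈ P then 1 else 0)

/-- `V : ℕ → (nodes → ℕ)` is a run of the iterative method given by `crit` and
`elig` (with arbitrary tie-breaking): `V 0` is the all-zero allocation and each
`V (h+1)` is obtained from `V h` by allocating one more seat along a path. -/
def IsRun (crit : (Fin (T.n + 1) → ℕ) → Fin (T.n + 1) → ℝ)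
    (elig : (Fin (T.n + 1) → ℕ) → Fin (T.n + 1) → Prop)
    (V : ℕ → Fin (T.n + 1) → ℕ) : Prop :=
  (∀ i, V 0 i = 0) ∧ ∀ h, ∃ P, T.IsStepWith crit elig P (V h) (V (h + 1))

/-- Adams' criterion: a child `c` minimizing `V c / R c` receives the seat. -/
noncomputable def adamsCrit (V : Fin (T.n + 1) → ℕ) (c : Fin (T.n + 1)) : ℝ :=
  (V c : ℝ) / T.R c

/-- Jefferson's criterion: a child `c` minimizing `(V c + 1) / R c` receives the seat. -/
noncomputable def jeffersonCrit (V : Fin (T.n + 1) → ℕ) (c : Fin (T.n + 1)) : ℝ :=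
  ((V c : ℝ) + 1) / T.R c

/-- Trivial eligibility constraint: every child is eligible. -/
def trivElig (_ : Fin (T.n + 1) → ℕ) (_ : Fin (T.n + 1)) : Prop := True

/-- Eligibility constraint of the quota method: `V c / W c < V (parent c) + 1`. -/
def quotaElig (V : Fin (T.n + 1) → ℕ) (c : Fin (T.n + 1)) : Prop :=
  (V c : ℝ) / T.W c < (V (T.parent c) : ℝ) + 1

/-- Eligibility constraint of the upper-compliant quota method:
`V c / R c < (V a + 1) / R a` for every ancestor `a` of `c`. -/
def ucElig (V : Fin (T.n + 1) → ℕ) (c : Fin (T.n + 1)) : Prop :=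
  ∀ a ∈ T.ancestors c, (V c : ℝ) / T.R c < ((V a : ℝ) + 1) / T.R a

end MLA

theorem exists_sum_eq_of_le_of_le {ι : Type*} {s : Finset ι} {l u : ι → ℕ} {v : ℕ}
    (hlu : ∀ c ∈ s, l c ≤ u c) (hl : ∑ c ∈ s, l c ≤ v) (hu : v ≤ ∑ c ∈ s, u c) :
    ∃ k : ι → ℕ, ∑ c ∈ s, k c = v ∧ ∀ c ∈ s, l c ≤ k c ∧ k c ≤ u c := by
  classical
  induction v, hl using Nat.le_induction with
  | base => exact ⟨l, rfl, fun c hc => ⟨le_rfl, hlu c hc⟩⟩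
  | succ v _ ih =>
    obtain ⟨k, hsum, hk⟩ := ih (Nat.le_of_succ_le hu)
    obtain ⟨d, hd, hdu⟩ : ∃ d ∈ s, k d < u d := Finset.exists_lt_of_sum_lt (hsum ▸ hu)
    refine ⟨k + Pi.single d 1, ?_, fun c hc => ?_⟩
    · simp only [Pi.add_apply, Finset.sum_add_distrib, hsum, Finset.sum_pi_single', if_pos hd]
    · have := hk c hc
      obtain rfl | hcd := eq_or_ne c d
      · simp only [Pi.add_apply, Pi.single_eq_same]
        omega
      · simpa only [Pi.add_apply, Pi.single_eq_of_ne hcd, add_zero] using this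

section Rounding

variable {K ι : Type*} [CommRing K] [LinearOrder K] [IsStrictOrderedRing K] {s : Finset ι}
  {w : ι → K}

theorem mul_lt_mul_add_one_of_le_one {a x y : K} (ha : a ≤ 1)
    (hxy : x ≤ y) (hyx : y < x + 1) : a * y < a * x + 1 := by
  have : a * (y - x) ≤ y - x := mul_le_of_le_one_left (sub_nonneg.2 hxy) ha
  linarith

variable [FloorSemiring K]

theorem sum_floor_mul_le (hw : ∀ c ∈ s, 0 ≤ w c) (hsum : ∑ c ∈ s, w c = 1) {y : K}
    (hy : 0 ≤ y) : ((∑ c ∈ s, ⌊w c * y⌋₊ : ℕ) : K) ≤ y :=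
  calc ((∑ c ∈ s, ⌊w c * y⌋₊ : ℕ) : K) = ∑ c ∈ s, (⌊w c * y⌋₊ : K) := Nat.cast_sum _ _
    _ ≤ ∑ c ∈ s, w c * y :=
      Finset.sum_le_sum fun c hc => Nat.floor_le (mul_nonneg (hw c hc) hy)
    _ = y := by rw [← Finset.sum_mul, hsum, one_mul]

theorem le_sum_ceil_mul (hsum : ∑ c ∈ s, w c = 1) (x : K) :
    x ≤ ((∑ c ∈ s, ⌈w c * x⌉₊ : ℕ) : K) :=
  calc x = ∑ c ∈ s, w c * x := by rw [← Finset.sum_mul, hsum, one_mul]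
    _ ≤ ∑ c ∈ s, (⌈w c * x⌉₊ : K) := Finset.sum_le_sum fun c _ => Nat.le_ceil _
    _ = ((∑ c ∈ s, ⌈w c * x⌉₊ : ℕ) : K) := (Nat.cast_sum _ _).symm

theorem exists_sum_eq_and_mul_lt_add_one (hw : ∀ c ∈ s, 0 ≤ w c) (hsum : ∑ c ∈ s, w c = 1)
    {x y : K} {v : ℕ} (hx : 0 ≤ x) (hxv : x ≤ v) (hvy : v ≤ y) (hyx : y < x + 1) :
    ∃ k : ι → ℕ, ∑ c ∈ s, k c = v ∧ ∀ c ∈ s, w c * y < k c + 1 ∧ k c < w c * x + 1 := by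
  have hy : 0 ≤ y := hx.trans (hxv.trans hvy)
  have floor_le_ceil : ∀ c ∈ s, ⌊w c * y⌋₊ ≤ ⌈w c * x⌉₊ := fun c hc => by
    have hlt : w c * y < w c * x + 1 :=
      mul_lt_mul_add_one_of_le_one ((Finset.single_le_sum hw hc).trans_eq hsum)
        (hxv.trans hvy) hyx
    refine Nat.lt_succ_iff.1 ((Nat.floor_lt (mul_nonneg (hw c hc) hy)).2 ?_)
    push_cast
    exact hlt.trans_le (add_le_add_left (Nat.le_ceil _) 1)
  have sum_floor_le : ∑ c ∈ s, ⌊w c * y⌋₊ ≤ v := by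
    have : ((∑ c ∈ s, ⌊w c * y⌋₊ : ℕ) : K) < (v + 1 : ℕ) := by
      push_cast [← Nat.cast_sum]
      linarith [sum_floor_mul_le hw hsum hy]
    exact Nat.lt_succ_iff.1 (Nat.cast_lt.1 this)
  have le_sum_ceil : v ≤ ∑ c ∈ s, ⌈w c * x⌉₊ := by
    have : (v : K) < (∑ c ∈ s, ⌈w c * x⌉₊ + 1 : ℕ) := by
      rw [Nat.cast_add_one]
      linarith [le_sum_ceil_mul hsum x]
    exact Nat.lt_succ_iff.1 (Nat.cast_lt.1 this)
  obtain ⟨k, hk, hbounds⟩ := exists_sum_eq_of_le_of_le floor_le_ceil sum_floor_le le_sum_ceil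
  refine ⟨k, hk, fun c hc => ⟨?_, ?_⟩⟩
  · exact (Nat.lt_floor_add_one _).trans_le (by exact_mod_cast Nat.succ_le_succ (hbounds c hc).1)
  · exact (Nat.cast_le.2 (hbounds c hc).2).trans_lt
      (Nat.ceil_lt_add_one (mul_nonneg (hw c hc) hx))

end Rounding

/-- The data passed down the tree: a number of seats of a node, and an interval of length less than
one that contains this number and is meant to contain the quotas of the node relative to all nodes
above it. -/
structure QuotaWindow where
  seats : ℕ
  lower : ℝ
  upper : ℝ
  lower_nonneg : 0 ≤ lower
  lower_le_seats : lower ≤ seats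
  seats_le_upper : seats ≤ upper
  upper_lt_lower_add_one : upper < lower + 1

namespace QuotaWindow

/-- The interval of quotas admitted by a window. -/
def interval (q : QuotaWindow) : Set ℝ := Set.Icc q.lower q.upper

theorem seats_mem_interval (q : QuotaWindow) : (q.seats : ℝ) ∈ q.interval :=
  ⟨q.lower_le_seats, q.seats_le_upper⟩

theorem floor_le_seats (q : QuotaWindow) {x : ℝ} (hx : x ∈ q.interval) : ⌊x⌋ ≤ (q.seats : ℤ) := by
  rw [Int.floor_le_iff, Int.cast_natCast]
  linarith [hx.2, q.upper_lt_lower_add_one, q.lower_le_seats]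

theorem seats_le_ceil (q : QuotaWindow) {x : ℝ} (hx : x ∈ q.interval) : (q.seats : ℤ) ≤ ⌈x⌉ := by
  rw [Int.le_ceil_iff, Int.cast_natCast]
  linarith [hx.1, q.upper_lt_lower_add_one, q.seats_le_upper]

/-- The window holding exactly `h` seats and the quota `h`, as at the root. -/
def ofSeats (h : ℕ) : QuotaWindow where
  seats := h
  lower := h
  upper := h
  lower_nonneg := h.cast_nonneg
  lower_le_seats := le_rfl
  seats_le_upper := le_rfl
  upper_lt_lower_add_one := lt_add_one _

theorem exists_seats_eq_and_mapsTo (q : QuotaWindow) {a : ℝ} (ha : 0 ≤ a) (ha' : a ≤ 1) {k : ℕ}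
    (hupper : a * q.upper < k + 1) (hlower : k < a * q.lower + 1) :
    ∃ q' : QuotaWindow, q'.seats = k ∧ Set.MapsTo (a * ·) q.interval q'.interval := by
  have hwidth : a * q.upper < a * q.lower + 1 := mul_lt_mul_add_one_of_le_one ha'
    (q.lower_le_seats.trans q.seats_le_upper) q.upper_lt_lower_add_one
  refine ⟨{
    seats := k
    lower := min k (a * q.lower)
    upper := max k (a * q.upper)
    lower_nonneg := le_min k.cast_nonneg (mul_nonneg ha q.lower_nonneg)
    lower_le_seats := min_le_left _ _
    seats_le_upper := le_max_left _ _
    upper_lt_lower_add_one := ?_ }, rfl, fun x hx => ⟨?_, ?_⟩⟩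
  · rw [← min_add_add_right]
    exact max_lt (lt_min (lt_add_one _) hlower) (lt_min hupper hwidth)
  · exact min_le_of_right_le (mul_le_mul_of_nonneg_left hx.1 ha)
  · exact le_max_of_le_right (mul_le_mul_of_nonneg_left hx.2 ha)

theorem exists_split (q : QuotaWindow) {ι : Type*} {s : Finset ι} {w : ι → ℝ}
    (hw : ∀ c ∈ s, 0 ≤ w c) (hsum : ∑ c ∈ s, w c = 1) :
    ∃ f : ι → QuotaWindow, ∑ c ∈ s, (f c).seats = q.seats ∧
      ∀ c ∈ s, Set.MapsTo (w c * ·) q.interval (f c).interval := by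
  obtain ⟨k, hk, hbounds⟩ := exists_sum_eq_and_mul_lt_add_one hw hsum q.lower_nonneg
    q.lower_le_seats q.seats_le_upper q.upper_lt_lower_add_one
  have : Nonempty QuotaWindow := ⟨q⟩
  choose! f hseats hmaps using fun c hc => q.exists_seats_eq_and_mapsTo (hw c hc)
    ((Finset.single_le_sum hw hc).trans_eq hsum) (hbounds c hc).1 (hbounds c hc).2
  exact ⟨f, (Finset.sum_congr rfl hseats).trans hk, hmaps⟩

end QuotaWindow

namespace MLA

variable (T : MLA)

theorem mem_children {c i : Fin (T.n + 1)} : c ∈ T.children i ↔ c ≠ 0 ∧ T.parent c = i := by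
  simp only [children, Finset.mem_filter_univ]

theorem ancestors_zero : T.ancestors 0 = {0} := by
  rw [ancestors, dif_pos rfl]

theorem ancestors_of_ne_zero {i : Fin (T.n + 1)} (hi : i ≠ 0) :
    T.ancestors i = insert (T.parent i) (T.ancestors (T.parent i)) := by
  rw [ancestors, dif_neg hi]

@[elab_as_elim]
theorem parent_induction {motive : Fin (T.n + 1) → Prop} (zero : motive 0)
    (step : ∀ i, i ≠ 0 → motive (T.parent i) → motive i) (i : Fin (T.n + 1)) : motive i :=
  if hi : i = 0 then hi ▸ zero else step i hi (parent_induction zero step (T.parent i))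
termination_by (i : ℕ)
decreasing_by exact T.parent_lt i hi

/-- The labelling of the nodes by recursion from the root: the root has label `x₀`, and the label of
any other node `i` is obtained by applying `step i` to the label of its parent. -/
def label {α : Type*} (x₀ : α) (step : Fin (T.n + 1) → α → α) (i : Fin (T.n + 1)) : α :=
  if _ : i = 0 then x₀ else step i (label x₀ step (T.parent i))
termination_by (i : ℕ)
decreasing_by exact T.parent_lt i ‹_›

theorem label_zero {α : Type*} (x₀ : α) (step : Fin (T.n + 1) → α → α) :
    T.label x₀ step 0 = x₀ := by
  rw [label, dif_pos rfl]

theorem label_of_ne_zero {α : Type*} (x₀ : α) (step : Fin (T.n + 1) → α → α)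
    {i : Fin (T.n + 1)} (hi : i ≠ 0) :
    T.label x₀ step i = step i (T.label x₀ step (T.parent i)) := by
  rw [label, dif_neg hi]

theorem le_of_mem_ancestors {i a : Fin (T.n + 1)} (ha : a ∈ T.ancestors i) : a ≤ i := by
  induction i using T.parent_induction with
  | zero => rw [ancestors_zero, Finset.mem_singleton] at ha; exact ha.le
  | step i hi ih =>
    have hlt : T.parent i < i := T.parent_lt i hi
    rw [T.ancestors_of_ne_zero hi, Finset.mem_insert] at ha
    obtain rfl | ha := ha
    · exact hlt.le
    · exact (ih ha).trans hlt.le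

theorem notMem_ancestors_self {i : Fin (T.n + 1)} (hi : i ≠ 0) : i ∉ T.ancestors i := by
  have hlt : T.parent i < i := T.parent_lt i hi
  rw [T.ancestors_of_ne_zero hi, Finset.mem_insert, not_or]
  exact ⟨hlt.ne', fun h => (T.le_of_mem_ancestors h).not_gt hlt⟩

theorem R_pos (i : Fin (T.n + 1)) : 0 < T.R i :=
  Finset.prod_pos fun a _ => T.W_pos a

theorem R_of_ne_zero {i : Fin (T.n + 1)} (hi : i ≠ 0) : T.R i = T.W i * T.R (T.parent i) := by
  rw [R, Finset.prod_insert (T.notMem_ancestors_self hi), T.ancestors_of_ne_zero hi, R]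

theorem exists_quotaWindows (h : ℕ) : ∃ q : Fin (T.n + 1) → QuotaWindow,
    T.IsAlloc h (fun i => (q i).seats) ∧
    ∀ i, i ≠ 0 → Set.MapsTo (T.W i * ·) (q (T.parent i)).interval (q i).interval := by
  have split (i : Fin (T.n + 1)) (p : QuotaWindow) : ∃ f : Fin (T.n + 1) → QuotaWindow,
      (T.children i).Nonempty → ∑ c ∈ T.children i, (f c).seats = p.seats ∧
        ∀ c ∈ T.children i, Set.MapsTo (T.W c * ·) p.interval (f c).interval := by
    by_cases hi : (T.children i).Nonempty
    · obtain ⟨f, hf⟩ := p.exists_split (fun c _ => (T.W_pos c).le) (T.W_sum i hi)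
      exact ⟨f, fun _ => hf⟩
    · exact ⟨fun _ => p, fun hi' => absurd hi' hi⟩
  choose f hf using split
  let q := T.label (.ofSeats h) fun c p => f (T.parent c) p c
  have hq {c i : Fin (T.n + 1)} (hc : c ∈ T.children i) : q c = f i (q i) c := by
    obtain ⟨hc0, rfl⟩ := T.mem_children.1 hc
    exact T.label_of_ne_zero _ _ hc0
  refine ⟨q, ⟨congrArg QuotaWindow.seats (T.label_zero _ _), fun i hi => ?_⟩, fun c hc0 => ?_⟩
  · exact (hf i (q i) hi).1.symm.trans (Finset.sum_congr rfl fun c hc => by simp only [hq hc])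
  · have hc : c ∈ T.children (T.parent c) := T.mem_children.2 ⟨hc0, rfl⟩
    rw [hq hc]
    exact (hf _ _ ⟨c, hc⟩).2 c hc

variable {T}

theorem ratio_mul_seats_mem_interval {q : Fin (T.n + 1) → QuotaWindow}
    (hq : ∀ i, i ≠ 0 → Set.MapsTo (T.W i * ·) (q (T.parent i)).interval (q i).interval)
    (i : Fin (T.n + 1)) {a : Fin (T.n + 1)} (ha : a ∈ insert i (T.ancestors i)) :
    T.R i / T.R a * (q a).seats ∈ (q i).interval := by
  have self (i : Fin (T.n + 1)) : T.R i / T.R i * (q i).seats ∈ (q i).interval := by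
    rw [div_self (T.R_pos i).ne', one_mul]
    exact (q i).seats_mem_interval
  induction i using T.parent_induction with
  | zero =>
    obtain rfl : a = 0 := by simpa only [ancestors_zero, Finset.pair_eq_singleton,
      Finset.mem_singleton] using ha
    exact self 0
  | step i hi ih =>
    obtain rfl | ha := Finset.mem_insert.1 ha
    · exact self a
    · rw [T.R_of_ne_zero hi, mul_div_assoc, mul_assoc]
      exact hq i hi (ih (T.ancestors_of_ne_zero hi ▸ ha))

end MLA

/-- For every multi-level apportionment instance and every
number of seats `h`, there exists an allocation of `h` seats that fulfills both
upper quota and lower quota. -/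
theorem exists_alloc_within_both_quotas (T : MLA) (h : ℕ) :
    ∃ V : Fin (T.n + 1) → ℕ,
      T.IsAlloc h V ∧ T.FulfillsUpperQuota V ∧ T.FulfillsLowerQuota V := by
  obtain ⟨q, halloc, hq⟩ := T.exists_quotaWindows h
  have quota_mem (i a) (ha : a ∈ T.ancestors i) : T.R i / T.R a * (q a).seats ∈ (q i).interval :=
    MLA.ratio_mul_seats_mem_interval hq i (Finset.mem_insert_of_mem ha)
  exact ⟨fun i => (q i).seats, halloc,
    fun i a ha => (q i).seats_le_ceil (quota_mem i a ha),
    fun i a ha => (q i).floor_le_seats (quota_mem i a ha)⟩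
end

section
/- Let A be a nonempty finite set, let (e^x_a)_{a∈A} and (e^y_a)_{a∈A} be families of positive real numbers such that the ratio e^x_a / e^y_a is the same for all a ∈ A, and let V be an integer such that ⌊e^x_a + e^y_a⌋ ≤ V ≤ ⌈e^x_a + e^y_a⌉ for every a ∈ A. Then max_{a∈A} ⌊e^x_a⌋ + max_{a∈A} ⌊e^y_a⌋ ≤ V ≤ min_{a∈A} ⌈e^x_a⌉ + min_{a∈A} ⌈e^y_a⌉. -/
/-! The constant ratio forces `eˣ` and `eʸ` to increase together, so for any `a, b ∈ A` one of the
two, call it `c`, satisfies both `eˣ a ≤ eˣ c` and `eʸ b ≤ eʸ c`. Hence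
`⌊eˣ a⌋ + ⌊eʸ b⌋ ≤ ⌊eˣ c⌋ + ⌊eʸ c⌋ ≤ ⌊eˣ c + eʸ c⌋ ≤ V`. The upper bound is order dual. -/

section Monovary

variable {α β γ : Type*} [Preorder β] [LinearOrder γ] {A : Set α} {x : α → β} {y : α → γ}
  {a b : α}

theorem exists_mem_le_and_le_of_monovaryOn (hxy : MonovaryOn x y A) (ha : a ∈ A) (hb : b ∈ A) :
    ∃ c ∈ A, x a ≤ x c ∧ y b ≤ y c := by
  rcases lt_or_ge (y a) (y b) with hlt | hge
  · exact ⟨b, hb, hxy ha hb hlt, le_rfl⟩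
  · exact ⟨a, ha, le_rfl, hge⟩

theorem exists_mem_ge_and_ge_of_monovaryOn (hxy : MonovaryOn x y A) (ha : a ∈ A) (hb : b ∈ A) :
    ∃ c ∈ A, x c ≤ x a ∧ y c ≤ y b :=
  exists_mem_le_and_le_of_monovaryOn hxy.dual ha hb

end Monovary

theorem monovaryOn_of_div_eq_div {α K : Type*} [Field K] [LinearOrder K] [IsStrictOrderedRing K]
    {A : Set α} {x y : α → K} (hx : ∀ a ∈ A, 0 ≤ x a) (hy : ∀ a ∈ A, 0 < y a)
    (hratio : ∀ a ∈ A, ∀ b ∈ A, x a / y a = x b / y b) : MonovaryOn x y A := by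
  intro a ha b hb hlt
  have hratio_nonneg : 0 ≤ x a / y a := div_nonneg (hx a ha) (hy a ha).le
  calc
    x a = x a / y a * y a := (div_mul_cancel₀ _ (hy a ha).ne').symm
    _ ≤ x a / y a * y b := mul_le_mul_of_nonneg_left hlt.le hratio_nonneg
    _ = x b / y b * y b := by rw [hratio a ha b hb]
    _ = x b := div_mul_cancel₀ _ (hy b hb).ne'

section FinsetExtrema

variable {ι κ G : Type*} [AddCommGroup G] {s : Finset ι} {t : Finset κ} {f : ι → G} {g : κ → G}
  {u : G}

theorem sup'_add_sup'_le_iff [SemilatticeSup G] [IsOrderedAddMonoid G] (hs : s.Nonempty)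
    (ht : t.Nonempty) :
    s.sup' hs f + t.sup' ht g ≤ u ↔ ∀ a ∈ s, ∀ b ∈ t, f a + g b ≤ u := by
  simp_rw [← le_sub_iff_add_le, Finset.sup'_le_iff, le_sub_iff_add_le, ← le_sub_iff_add_le',
    Finset.sup'_le_iff]

theorem le_inf'_add_inf'_iff [SemilatticeInf G] [IsOrderedAddMonoid G] (hs : s.Nonempty)
    (ht : t.Nonempty) :
    u ≤ s.inf' hs f + t.inf' ht g ↔ ∀ a ∈ s, ∀ b ∈ t, u ≤ f a + g b :=
  sup'_add_sup'_le_iff (G := Gᵒᵈ) hs ht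

end FinsetExtrema

theorem seat_split_within_bounds_general {α R : Type*} [Ring R] [LinearOrder R]
    [IsStrictOrderedRing R] [FloorRing R] {A : Set α} {ex ey : α → R} (hxy : MonovaryOn ex ey A)
    {V : ℤ} (hV : ∀ a ∈ A, ⌊ex a + ey a⌋ ≤ V ∧ V ≤ ⌈ex a + ey a⌉) :
    (∀ a ∈ A, ∀ b ∈ A, ⌊ex a⌋ + ⌊ey b⌋ ≤ V) ∧ ∀ a ∈ A, ∀ b ∈ A, V ≤ ⌈ex a⌉ + ⌈ey b⌉ := by
  constructor <;> intro a ha b hb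
  · obtain ⟨c, hc, hac, hbc⟩ := exists_mem_le_and_le_of_monovaryOn hxy ha hb
    calc
      ⌊ex a⌋ + ⌊ey b⌋ ≤ ⌊ex c⌋ + ⌊ey c⌋ := add_le_add (Int.floor_mono hac) (Int.floor_mono hbc)
      _ ≤ ⌊ex c + ey c⌋ := Int.le_floor_add _ _
      _ ≤ V := (hV c hc).1
  · obtain ⟨c, hc, hca, hcb⟩ := exists_mem_ge_and_ge_of_monovaryOn hxy ha hb
    calc
      V ≤ ⌈ex c + ey c⌉ := (hV c hc).2
      _ ≤ ⌈ex c⌉ + ⌈ey c⌉ := Int.ceil_add_le _ _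
      _ ≤ ⌈ex a⌉ + ⌈ey b⌉ := add_le_add (Int.ceil_mono hca) (Int.ceil_mono hcb)

/-- Let `A` be a nonempty finite set, `(eˣ a)` and `(eʸ a)`
families of positive reals with a constant ratio `eˣ a / eʸ a` over `a ∈ A`,
and `V` an integer with `⌊eˣ a + eʸ a⌋ ≤ V ≤ ⌈eˣ a + eʸ a⌉` for all `a ∈ A`.
Then `maxₐ ⌊eˣ a⌋ + maxₐ ⌊eʸ a⌋ ≤ V ≤ minₐ ⌈eˣ a⌉ + minₐ ⌈eʸ a⌉`. -/
theorem seat_split_within_bounds {α : Type*} (A : Finset α) (hA : A.Nonempty)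
    (ex ey : α → ℝ) (hx : ∀ a ∈ A, 0 < ex a) (hy : ∀ a ∈ A, 0 < ey a)
    (hratio : ∀ a ∈ A, ∀ b ∈ A, ex a / ey a = ex b / ey b)
    (V : ℤ) (hV : ∀ a ∈ A, ⌊ex a + ey a⌋ ≤ V ∧ V ≤ ⌈ex a + ey a⌉) :
    (A.sup' hA fun a => ⌊ex a⌋) + (A.sup' hA fun a => ⌊ey a⌋) ≤ V ∧
    V ≤ (A.inf' hA fun a => ⌈ex a⌉) + (A.inf' hA fun a => ⌈ey a⌉) := by
  rw [sup'_add_sup'_le_iff, le_inf'_add_inf'_iff]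
  exact seat_split_within_bounds_general
    (monovaryOn_of_div_eq_div (A := A) (fun a ha => (hx a ha).le) hy hratio) hV
end
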